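/- In the local public good game under Assumptions 1 and 2, let (x*, y*, g*) be a sociable Nash equilibrium and let i, j be periphery players with identical neighborhoods, N_i(g*) = N_j(g*). Then x̄*_i ≥ x̄*_j, x*_i ≥ x*_j and y*_i ≥ y*_j if and only if w_i ≥ w_j. -/

import Mathlib

open Finset Function

noncomputable section

/-- A directed network on `n` players: `g i j = true` iff `i` sponsors a link to `j`. -/
abbrev Net (n : ℕ) := Fin n → Fin n → Bool

/-- The number of links sponsored by player `i`. -/
def deg {n : ℕ} (g : Net n) (i : Fin n) : ℕ :=
  (Finset.univ.filter fun j => g i j = true).card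

/-- Spillovers received by player `i`: the provision of the players she links to. -/
def spill {n : ℕ} (x : Fin n → ℝ) (g : Net n) (i : Fin n) : ℝ :=
  ∑ j, if g i j = true then x j else 0

/-- Public good consumption of player `i`: own provision plus spillovers. -/
def cons {n : ℕ} (x : Fin n → ℝ) (g : Net n) (i : Fin n) : ℝ :=
  x i + spill x g i

/-- The primitives of the local public good game: prices of the private good, wealths,
linking cost, utilities and induced Engel curves. -/
structure Game (n : ℕ) where
  p : Fin n → ℝ
  w : Fin n → ℝ
  k : ℝ
  U : Fin n → ℝ → ℝ → ℝ
  γ : Fin n → ℝ → ℝ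
  p_pos : ∀ i, 0 < p i
  w_pos : ∀ i, 0 < w i
  k_nonneg : 0 ≤ k
  U_smooth : ∀ i, ContDiff ℝ 2 fun q : ℝ × ℝ => U i q.1 q.2
  U_sconcave : ∀ i, StrictConcaveOn ℝ Set.univ fun q : ℝ × ℝ => U i q.1 q.2
  U_mono_x : ∀ i b, StrictMono fun a => U i a b
  U_mono_y : ∀ i a, StrictMono fun b => U i a b

/-- Net social income of player `i`. -/
def netInc {n : ℕ} (G : Game n) (x : Fin n → ℝ) (g : Net n) (i : Fin n) : ℝ :=
  G.w i - (deg g i : ℝ) * G.k + spill x g i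

/-- Assumption 1 (normality): each Engel curve is continuously differentiable with
derivative in `[0,1]`. -/
def NormalGame {n : ℕ} (G : Game n) : Prop :=
  ∀ i, ContDiff ℝ 1 (G.γ i) ∧ ∀ t : ℝ, deriv (G.γ i) t ∈ Set.Icc (0 : ℝ) 1

/-- `G.γ i` is the demand (Engel curve) induced by `U i`: on the budget line with
income `m`, and under the constraint that public good consumption is at least the
spillovers `s`, the optimal public good consumption is `max (γ i m) s`. -/
def EngelCompatible {n : ℕ} (G : Game n) : Prop :=
  ∀ (i : Fin n) (m s xb yb : ℝ), 0 ≤ s → s ≤ xb → 0 ≤ yb → xb + G.p i * yb = m →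
    (∀ xb' yb' : ℝ, s ≤ xb' → 0 ≤ yb' → xb' + G.p i * yb' = m →
      G.U i xb' yb' ≤ G.U i xb yb) →
    xb = max (G.γ i m) s

/-- Budget feasibility of player `i`'s strategy. -/
def Feasible {n : ℕ} (G : Game n) (x y : Fin n → ℝ) (g : Net n) (i : Fin n) : Prop :=
  0 ≤ x i ∧ 0 ≤ y i ∧ g i i = false ∧
    x i + G.p i * y i + (deg g i : ℝ) * G.k = G.w i

/-- Player `i`'s payoff. -/
def payoff {n : ℕ} (G : Game n) (x y : Fin n → ℝ) (g : Net n) (i : Fin n) : ℝ :=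
  G.U i (cons x g i) (y i)

/-- Replace row `i` of the network `g` by `r` (a unilateral linking deviation). -/
def updRow {n : ℕ} (g : Net n) (i : Fin n) (r : Fin n → Bool) : Net n :=
  fun a b => if a = i then r b else g a b

/-- Nash equilibrium: every player's strategy is feasible and no feasible unilateral
deviation (in provision, private consumption and links) improves her payoff. -/
def Nash {n : ℕ} (G : Game n) (x y : Fin n → ℝ) (g : Net n) : Prop :=
  (∀ i, Feasible G x y g i) ∧
  ∀ (i : Fin n) (xi yi : ℝ) (r : Fin n → Bool),
    Feasible G (Function.update x i xi) (Function.update y i yi) (updRow g i r) i →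
    payoff G (Function.update x i xi) (Function.update y i yi) (updRow g i r) i ≤
      payoff G x y g i

/-- Sociable Nash equilibrium: a Nash equilibrium in which any payoff-equivalent
deviation only uses links already established in equilibrium (players indifferent
about a link establish it). -/
def Sociable {n : ℕ} (G : Game n) (x y : Fin n → ℝ) (g : Net n) : Prop :=
  Nash G x y g ∧
  ∀ (i : Fin n) (xi yi : ℝ) (r : Fin n → Bool),
    Feasible G (Function.update x i xi) (Function.update y i yi) (updRow g i r) i →
    payoff G (Function.update x i xi) (Function.update y i yi) (updRow g i r) i =
      payoff G x y g i →
    ∀ j, r j = true → g i j = true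

/-- Strict Nash equilibrium: any feasible unilateral deviation that differs from the
equilibrium strategy strictly reduces the deviator's payoff. -/
def StrictNash {n : ℕ} (G : Game n) (x y : Fin n → ℝ) (g : Net n) : Prop :=
  (∀ i, Feasible G x y g i) ∧
  ∀ (i : Fin n) (xi yi : ℝ) (r : Fin n → Bool),
    Feasible G (Function.update x i xi) (Function.update y i yi) (updRow g i r) i →
    (xi ≠ x i ∨ yi ≠ y i ∨ r ≠ g i) →
    payoff G (Function.update x i xi) (Function.update y i yi) (updRow g i r) i <
      payoff G x y g i

/-- `(xi, yi)` is an optimal bundle for player `i` in isolation (no links). -/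
def IsoOpt {n : ℕ} (G : Game n) (i : Fin n) (xi yi : ℝ) : Prop :=
  0 ≤ xi ∧ 0 ≤ yi ∧ xi + G.p i * yi = G.w i ∧
    ∀ xi' yi' : ℝ, 0 ≤ xi' → 0 ≤ yi' → xi' + G.p i * yi' = G.w i →
      G.U i xi' yi' ≤ G.U i xi yi

/-- `g` is a core-periphery graph with core `C`: core players are mutually linked
(with reciprocated links), periphery players have no links among themselves, and
every non-isolated periphery player links to some core player. -/
def IsCorePeriphery {n : ℕ} (g : Net n) (C : Finset (Fin n)) : Prop :=
  (∀ i ∈ C, ∀ j ∈ C, i ≠ j → g i j = true ∧ g j i = true) ∧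
  (∀ i ∉ C, ∀ j ∉ C, g i j = false) ∧
  (∀ i ∉ C, (∃ j, g i j = true ∨ g j i = true) → ∃ l ∈ C, g i l = true)

/-- `g` is a nested split graph with core `C`: a core-periphery graph in which the
neighborhoods of periphery players are nested. -/
def IsNestedSplit {n : ℕ} (g : Net n) (C : Finset (Fin n)) : Prop :=
  IsCorePeriphery g C ∧
  ∀ i ∉ C, ∀ j ∉ C, deg g j ≤ deg g i → ∀ l, g j l = true → g i l = true

/-- The core of an equilibrium: the players contributing strictly more than the
linking cost. -/
def coreOf {n : ℕ} (G : Game n) (x : Fin n → ℝ) : Finset (Fin n) :=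
  Finset.univ.filter fun i => G.k < x i

/-- Adjacency in the closure of `g`. -/
def adjBar {n : ℕ} (g : Net n) (i j : Fin n) : Prop :=
  g i j = true ∨ g j i = true

/-- All players' consumption choices are optimal given the (fixed) network. -/
def ConsOpt {n : ℕ} (G : Game n) (x y : Fin n → ℝ) (g : Net n) : Prop :=
  ∀ i, Feasible G x y g i ∧
    ∀ xi yi : ℝ,
      Feasible G (Function.update x i xi) (Function.update y i yi) g i →
      payoff G (Function.update x i xi) (Function.update y i yi) g i ≤ payoff G x y g i

/-- Assumption 2: identical preferences and identical price of the private good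
(hence identical Engel curves). -/
def Homogeneous {n : ℕ} (G : Game n) : Prop :=
  ∀ i j, G.U i = G.U j ∧ G.p i = G.p j ∧ G.γ i = G.γ j

/-- Social welfare: the sum of individual payoffs. -/
def welfare {n : ℕ} (G : Game n) (x y : Fin n → ℝ) (g : Net n) : ℝ :=
  ∑ i, G.U i (cons x g i) (y i)

/-- Aggregate feasibility for the social planner: total provision, total private
consumption and total linking costs are financed by total wealth. -/
def FeasAgg {n : ℕ} (G : Game n) (x y : Fin n → ℝ) (g : Net n) : Prop :=
  (∀ i, 0 ≤ x i) ∧ (∀ i, 0 ≤ y i) ∧ (∀ i, g i i = false) ∧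
    ∑ i, x i + ∑ i, G.p i * y i + (∑ i, (deg g i : ℝ)) * G.k ≤ ∑ i, G.w i

/-- Efficient (welfare-maximizing) configuration. -/
def Efficient {n : ℕ} (G : Game n) (x y : Fin n → ℝ) (g : Net n) : Prop :=
  FeasAgg G x y g ∧
  ∀ (x' y' : Fin n → ℝ) (g' : Net n), FeasAgg G x' y' g' →
    welfare G x' y' g' ≤ welfare G x y g

/-- The same game with a different linking cost. -/
def Game.withCost {n : ℕ} (G : Game n) (k' : ℝ) (h : 0 ≤ k') : Game n :=
  { G with k := k', k_nonneg := h }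

/-- The same game with a different wealth distribution. -/
def Game.withWealth {n : ℕ} (G : Game n) (w' : Fin n → ℝ) (h : ∀ i, 0 < w' i) : Game n :=
  { G with w := w', w_pos := h }

/-- Budget feasibility with personalized public good prices `ρ` and lump-sum taxes `τ`. -/
def FeasibleT {n : ℕ} (G : Game n) (ρ τ : Fin n → ℝ) (x y : Fin n → ℝ) (g : Net n)
    (i : Fin n) : Prop :=
  0 ≤ x i ∧ 0 ≤ y i ∧ g i i = false ∧
    ρ i * x i + G.p i * y i + (deg g i : ℝ) * G.k = G.w i - τ i

/-- Nash equilibrium under personalized public good prices `ρ` and lump-sum taxes `τ`. -/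
def NashT {n : ℕ} (G : Game n) (ρ τ : Fin n → ℝ) (x y : Fin n → ℝ) (g : Net n) : Prop :=
  (∀ i, FeasibleT G ρ τ x y g i) ∧
  ∀ (i : Fin n) (xi yi : ℝ) (r : Fin n → Bool),
    FeasibleT G ρ τ (Function.update x i xi) (Function.update y i yi) (updRow g i r) i →
    payoff G (Function.update x i xi) (Function.update y i yi) (updRow g i r) i ≤
      payoff G x y g i

/-!
Links enter a player's choice problem only through their number and the spillovers they bring.
Hence two players with identical neighborhoods, prices and Engel curve `γ` face a common spillover
level `s`, and their net social incomes `m` differ exactly by their wealths. Public good consumption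
is `max (γ m) s` and private expenditure is the rest, `m - max (γ m) s = min (m - γ m) (m - s)`.
Normality says that `γ m` and `m - γ m` are both monotone in `m`, so the two consumption levels are
too. Conversely, public good consumption and private expenditure add up to `m`.
-/

section Development

variable {n : ℕ} {G : Game n} {x y : Fin n → ℝ} {g : Net n} {i j : Fin n}

theorem monotone_sub_max {α : Type*} [AddCommGroup α] [LinearOrder α] [IsOrderedAddMonoid α]
    {f : α → α} (hf : Monotone fun m => m - f m) (s : α) : Monotone fun m => m - max (f m) s := by
  simp only [← min_sub_sub_left]
  exact hf.min fun _ _ h => sub_le_sub_right h s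

theorem NormalGame.monotone_engel (hN : NormalGame G) (i : Fin n) : Monotone (G.γ i) :=
  monotone_of_deriv_nonneg ((hN i).1.differentiable one_ne_zero) fun m => ((hN i).2 m).1

theorem NormalGame.monotone_sub_engel (hN : NormalGame G) (i : Fin n) :
    Monotone fun m => m - G.γ i m := by
  intro a b hab
  have hincr : G.γ i b - G.γ i a ≤ 1 * (b - a) :=
    image_sub_le_mul_sub_of_deriv_le ((hN i).1.differentiable one_ne_zero)
      (fun m => ((hN i).2 m).2) hab
  linarith

theorem updRow_self (g : Net n) (i : Fin n) : updRow g i (g i) = g := by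
  funext a b
  by_cases h : a = i <;> simp [updRow, h]

theorem deg_congr (h : ∀ l, g i l = g j l) : deg g i = deg g j := by
  simp only [deg, h]

theorem spill_congr (x : Fin n → ℝ) (h : ∀ l, g i l = g j l) : spill x g i = spill x g j := by
  simp only [spill, h]

theorem spill_nonneg (hx : ∀ l, 0 ≤ x l) (g : Net n) (i : Fin n) : 0 ≤ spill x g i :=
  Finset.sum_nonneg fun l _ => ite_nonneg (hx l) le_rfl

theorem spill_update_self (x : Fin n → ℝ) (hg : g i i = false) (t : ℝ) :
    spill (Function.update x i t) g i = spill x g i := by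
  refine Finset.sum_congr rfl fun l _ => ?_
  obtain rfl | hl := eq_or_ne l i
  · simp [hg]
  · simp [hl]

theorem cons_update_self (x : Fin n → ℝ) (hg : g i i = false) (t : ℝ) :
    cons (Function.update x i t) g i = t + spill x g i := by
  simp only [_root_.cons, spill_update_self x hg, Function.update_self]

theorem cons_le_cons_iff (hspill : spill x g i = spill x g j) :
    cons x g j ≤ cons x g i ↔ x j ≤ x i := by
  simp only [_root_.cons, hspill, add_le_add_iff_right]

theorem netInc_le_netInc_iff (hdeg : deg g i = deg g j) (hspill : spill x g i = spill x g j) :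
    netInc G x g j ≤ netInc G x g i ↔ G.w j ≤ G.w i := by
  simp only [netInc, hdeg, hspill, add_le_add_iff_right, sub_le_sub_iff_right]

theorem Feasible.cons_add_price_mul (h : Feasible G x y g i) :
    cons x g i + G.p i * y i = netInc G x g i := by
  obtain ⟨-, -, -, hbudget⟩ := h
  simp only [_root_.cons, netInc]
  linarith

theorem Nash.consOpt (h : Nash G x y g) : ConsOpt G x y g := fun i =>
  ⟨h.1 i, fun xi yi => by simpa only [updRow_self] using h.2 i xi yi (g i)⟩

theorem ConsOpt.utility_le (h : ConsOpt G x y g) {xb yb : ℝ} (hxb : spill x g i ≤ xb)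
    (hyb : 0 ≤ yb) (hbudget : xb + G.p i * yb = netInc G x g i) :
    G.U i xb yb ≤ G.U i (cons x g i) (y i) := by
  obtain ⟨⟨-, -, hg, -⟩, hopt⟩ := h i
  have hdev := hopt (xb - spill x g i) yb
  simp only [payoff, Feasible, cons_update_self x hg, Function.update_self, sub_add_cancel] at hdev
  refine hdev ⟨sub_nonneg.2 hxb, hyb, hg, ?_⟩
  simp only [netInc] at hbudget
  linarith

theorem ConsOpt.cons_eq_max (h : ConsOpt G x y g) (hEC : EngelCompatible G) (i : Fin n) :
    cons x g i = max (G.γ i (netInc G x g i)) (spill x g i) :=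
  hEC i _ _ _ (y i) (spill_nonneg (fun l => (h l).1.1) g i)
    (le_add_of_nonneg_left (h i).1.1) (h i).1.2.1 (h i).1.cons_add_price_mul
    fun _ _ hxb hyb hbudget => h.utility_le hxb hyb hbudget

theorem ConsOpt.cons_le_cons (h : ConsOpt G x y g) (hEC : EngelCompatible G)
    (hγ : G.γ i = G.γ j) (hmono : Monotone (G.γ j)) (hspill : spill x g i = spill x g j)
    (hinc : netInc G x g j ≤ netInc G x g i) : cons x g j ≤ cons x g i := by
  rw [h.cons_eq_max hEC i, h.cons_eq_max hEC j, hγ, hspill]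
  exact max_le_max_right _ (hmono hinc)

theorem ConsOpt.private_good_le (h : ConsOpt G x y g) (hEC : EngelCompatible G)
    (hp : G.p i = G.p j) (hγ : G.γ i = G.γ j) (hmono : Monotone fun m => m - G.γ j m)
    (hspill : spill x g i = spill x g j) (hinc : netInc G x g j ≤ netInc G x g i) :
    y j ≤ y i := by
  have hexpend : ∀ l, G.p l * y l =
      netInc G x g l - max (G.γ l (netInc G x g l)) (spill x g l) := fun l => by
    rw [← h.cons_eq_max hEC, ← (h l).1.cons_add_price_mul, add_sub_cancel_left]
  refine le_of_mul_le_mul_left ?_ (G.p_pos j)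
  calc G.p j * y j = _ := hexpend j
    _ ≤ netInc G x g i - max (G.γ j (netInc G x g i)) (spill x g j) :=
      monotone_sub_max hmono (spill x g j) hinc
    _ = G.p i * y i := by rw [hexpend i, hγ, hspill]
    _ = G.p j * y i := by rw [hp]

theorem periphery_same_neighbors_general (hEC : EngelCompatible G) (hC : ConsOpt G x y g)
    (hp : G.p i = G.p j) (hγ : G.γ i = G.γ j)
    (hmono : Monotone (G.γ j)) (hmono_sub : Monotone fun m => m - G.γ j m)
    (hdeg : deg g i = deg g j) (hspill : spill x g i = spill x g j) :
    (cons x g j ≤ cons x g i ∧ x j ≤ x i ∧ y j ≤ y i) ↔ G.w j ≤ G.w i := by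
  rw [← netInc_le_netInc_iff hdeg hspill]
  constructor
  · rintro ⟨hcons, -, hy⟩
    rw [← (hC i).1.cons_add_price_mul, ← (hC j).1.cons_add_price_mul, hp]
    exact add_le_add hcons (mul_le_mul_of_nonneg_left hy (G.p_pos j).le)
  · intro hinc
    have hcons := hC.cons_le_cons hEC hγ hmono hspill hinc
    exact ⟨hcons, (cons_le_cons_iff hspill).1 hcons,
      hC.private_good_le hEC hp hγ hmono_sub hspill hinc⟩

end Development

/-- under Assumptions 1 and 2, for two periphery players with identical
neighborhoods, consumption of both goods and own contribution are ordered as wealth. -/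
theorem periphery_same_neighbors {n : ℕ} (G : Game n) (hk : 0 < G.k)
    (hN : NormalGame G) (hEC : EngelCompatible G) (hH : Homogeneous G)
    (x y : Fin n → ℝ) (g : Net n) (hS : Sociable G x y g)
    (i j : Fin n) (hi : i ∉ coreOf G x) (hj : j ∉ coreOf G x)
    (hnbr : ∀ l, g i l = g j l) :
    (cons x g j ≤ cons x g i ∧ x j ≤ x i ∧ y j ≤ y i) ↔ G.w j ≤ G.w i := by
  obtain ⟨-, hp, hγ⟩ := hH i j
  exact periphery_same_neighbors_general hEC hS.1.consOpt hp hγ (hN.monotone_engel j)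
    (hN.monotone_sub_engel j) (deg_congr hnbr) (spill_congr x hnbr)
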